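/- arXiv:1611.05596 — 3 statements merged into one kernel-verified Lean document; each statement's English description precedes it below -/
import Mathlib

section
/- (Concentration bound via Ledoux's expansion coefficient.) Let (X, d, μ) be a metric measure space, 0 < ε < 1, and let r ≥ ρ > 0. Suppose E = Exp_L(X; 1−ε, ρ) is finite. Then α^ε(r) ≤ (1 − ε)·E·E^{−r/ρ}. In particular, if E > 1 then X has exponential concentration: α^ε(r) ≤ (1 − ε)·E·exp(−(ln E)·r/ρ) for all r ≥ ρ. -/
open MeasureTheory Metric Set Real

noncomputable section

/-- Isoperimetric enlargement `A_r = {x | d(x, A) ≤ r}`. -/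
def enl {X : Type*} [MetricSpace X] (A : Set X) (r : ℝ) : Set X :=
  {x | Metric.infDist x A ≤ r}

/-- Concentration function `α^ε(r)`. -/
def concFn {X : Type*} [MetricSpace X] [MeasurableSpace X] (μ : Measure X) (ε r : ℝ) : ℝ :=
  sSup {v : ℝ | ∃ A : Set X, MeasurableSet A ∧ ε ≤ (μ A).toReal ∧ v = 1 - (μ (enl A r)).toReal}

/-- Lipschitz constant of a real-valued function. -/
def lipConst {X : Type*} [MetricSpace X] (f : X → ℝ) : ℝ :=
  sSup {c : ℝ | ∃ x y : X, x ≠ y ∧ c = |f x - f y| / dist x y}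

/-- `f` is Lipschitz (some finite Lipschitz constant). -/
def IsLip {X : Type*} [MetricSpace X] (f : X → ℝ) : Prop :=
  ∃ C : ℝ, ∀ x y : X, |f x - f y| ≤ C * dist x y

/-- `m` is a quantile of order `ε` of `f` for `μ`. -/
def IsQuantile {X : Type*} [MetricSpace X] [MeasurableSpace X] (μ : Measure X)
    (ε : ℝ) (f : X → ℝ) (m : ℝ) : Prop :=
  ε ≤ (μ {x | f x ≤ m}).toReal ∧ 1 - ε ≤ (μ {x | m ≤ f x}).toReal

/-- Admissible constants for Gromov's expansion coefficient. -/
def expGSet {X : Type*} [MetricSpace X] [MeasurableSpace X] (μ : Measure X) (ε ρ : ℝ) : Set ℝ :=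
  {e : ℝ | 1 ≤ e ∧ ∀ A : Set X, MeasurableSet A → ε ≤ (μ A).toReal →
    e * ε ≤ (μ (enl A ρ)).toReal}

/-- Gromov's expansion coefficient. -/
def expG {X : Type*} [MetricSpace X] [MeasurableSpace X] (μ : Measure X) (ε ρ : ℝ) : ℝ :=
  sSup (expGSet μ ε ρ)

/-- Admissible constants for Ledoux's expansion coefficient. -/
def expLSet {X : Type*} [MetricSpace X] [MeasurableSpace X] (μ : Measure X) (ε ρ : ℝ) : Set ℝ :=
  {e : ℝ | 1 ≤ e ∧ ∀ B : Set X, MeasurableSet B → (μ (enl B ρ)).toReal ≤ ε →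
    e * (μ B).toReal ≤ (μ (enl B ρ)).toReal}

/-- Ledoux's expansion coefficient. -/
def expL {X : Type*} [MetricSpace X] [MeasurableSpace X] (μ : Measure X) (ε ρ : ℝ) : ℝ :=
  sSup (expLSet μ ε ρ)

/-- Partial diameter of a Borel measure on ℝ. -/
def partDiam (ν : Measure ℝ) (κ : ℝ) : ℝ :=
  sInf {D : ℝ | 0 ≤ D ∧ ∃ A : Set ℝ, MeasurableSet A ∧ Metric.diam A ≤ D ∧ 1 - κ ≤ (ν A).toReal}

/-- Observable diameter `ObsDiam(X; -κ)`. -/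
def obsDiam {X : Type*} [MetricSpace X] [MeasurableSpace X] (μ : Measure X) (κ : ℝ) : ℝ :=
  sSup {v : ℝ | ∃ f : X → ℝ, LipschitzWith 1 f ∧ v = partDiam (μ.map f) κ}

/-- `μ` is doubling with constant `C`. -/
def IsDoubling {X : Type*} [MetricSpace X] [MeasurableSpace X] (μ : Measure X) (C : ℝ) : Prop :=
  1 ≤ C ∧ ∀ (x : X) (r : ℝ), 0 < r →
    (μ (Metric.closedBall x (2 * r))).toReal ≤ C * (μ (Metric.closedBall x r)).toReal

theorem aux_le_enl {X : Type*} [MetricSpace X] [MeasurableSpace X]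
    (μ : Measure X) [IsProbabilityMeasure μ] (B : Set X) (ρ : ℝ) (hρ : 0 < ρ) :
    (μ B).toReal ≤ (μ (enl B ρ)).toReal := by
  apply ENNReal.toReal_mono (measure_ne_top _ _)
  apply measure_mono
  intro x hx
  show Metric.infDist x B ≤ ρ
  rw [Metric.infDist_zero_of_mem hx]
  exact hρ.le

theorem aux_one_mem {X : Type*} [MetricSpace X] [MeasurableSpace X]
    (μ : Measure X) [IsProbabilityMeasure μ] (ε ρ : ℝ) (hρ : 0 < ρ) :
    (1 : ℝ) ∈ expLSet μ ε ρ := by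
  refine ⟨le_refl _, fun B _ _ => ?_⟩
  rw [one_mul]
  exact aux_le_enl μ B ρ hρ

theorem aux_expL_mul {X : Type*} [MetricSpace X] [MeasurableSpace X]
    (μ : Measure X) [IsProbabilityMeasure μ] (ε ρ : ℝ) (hρ : 0 < ρ)
    (B : Set X) (hB : MeasurableSet B) (h : (μ (enl B ρ)).toReal ≤ ε) :
    expL μ ε ρ * (μ B).toReal ≤ (μ (enl B ρ)).toReal := by
  rcases (ENNReal.toReal_nonneg (a := μ B)).eq_or_lt with h0 | h0
  · rw [← h0, mul_zero]
    exact ENNReal.toReal_nonneg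
  · rw [← le_div_iff₀ h0]
    apply csSup_le ⟨1, aux_one_mem μ ε ρ hρ⟩
    intro e he
    rw [le_div_iff₀ h0]
    exact he.2 B hB h

theorem aux_iter {X : Type*} [MetricSpace X] [MeasurableSpace X] [BorelSpace X]
    (μ : Measure X) [IsProbabilityMeasure μ] (ε ρ : ℝ)
    (hε1 : ε < 1) (hρ : 0 < ρ) (hE : 1 ≤ expL μ (1 - ε) ρ)
    (A : Set X) (hA : MeasurableSet A) (hAε : ε ≤ (μ A).toReal) (n : ℕ) :
    ∀ s : ℝ, n * ρ < s →
      (μ {x | s ≤ Metric.infDist x A}).toReal * (expL μ (1 - ε) ρ) ^ n ≤ 1 - ε := by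
  have base : ∀ s : ℝ, 0 < s → (μ {x | s ≤ Metric.infDist x A}).toReal ≤ 1 - ε := by
    intro s hs
    have h1 : {x | s ≤ Metric.infDist x A} ⊆ Aᶜ := by
      intro x hx hxA
      have hx' : s ≤ Metric.infDist x A := hx
      rw [Metric.infDist_zero_of_mem hxA] at hx'
      linarith
    have h2 := ENNReal.toReal_mono (measure_ne_top μ _) (measure_mono (μ := μ) h1)
    have h3 : (μ Aᶜ).toReal = 1 - (μ A).toReal := probReal_compl_eq_one_sub hA
    linarith
  induction n with
  | zero => intro s hs; simpa using base s (by simpa using hs)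
  | succ n ih =>
    intro s hs
    push_cast at hs
    have hs' : n * ρ < s - ρ := by linarith
    have hpos : 0 < s - ρ := lt_of_le_of_lt (by positivity) hs'
    set B := {x | s ≤ Metric.infDist x A} with hBdef
    have hBm : MeasurableSet B :=
      (isClosed_le continuous_const (Metric.continuous_infDist_pt A)).measurableSet
    rcases B.eq_empty_or_nonempty with hB | hB
    · rw [hB]; simp; exact hε1.le
    · have hsub : enl B ρ ⊆ {x | s - ρ ≤ Metric.infDist x A} := by
        intro x hx
        have hx' : Metric.infDist x B ≤ ρ := hx
        have : s - Metric.infDist x A ≤ Metric.infDist x B := by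
          rw [Metric.le_infDist hB]
          intro y hy
          have hy' : s ≤ Metric.infDist y A := hy
          have := Metric.infDist_le_infDist_add_dist (s := A) (x := y) (y := x)
          rw [dist_comm] at this
          linarith
        show s - ρ ≤ Metric.infDist x A
        linarith
      have hm := ENNReal.toReal_mono (measure_ne_top μ _) (measure_mono (μ := μ) hsub)
      have h1 := aux_expL_mul μ (1 - ε) ρ hρ B hBm (hm.trans (base _ hpos))
      refine le_trans ?_ (ih (s - ρ) hs')
      rw [pow_succ', ← mul_assoc, mul_comm (μ B).toReal]
      exact mul_le_mul_of_nonneg_right (h1.trans hm) (by positivity)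

theorem stmt11 {X : Type*} [MetricSpace X] [MeasurableSpace X] [BorelSpace X]
    (μ : Measure X) [IsProbabilityMeasure μ] (ε ρ r : ℝ)
    (hε0 : 0 < ε) (hε1 : ε < 1) (hρ : 0 < ρ) (hr : ρ ≤ r)
    (hfin : BddAbove (expLSet μ (1 - ε) ρ)) :
    concFn μ ε r ≤ (1 - ε) * expL μ (1 - ε) ρ * (expL μ (1 - ε) ρ) ^ (-(r / ρ)) ∧
      (1 < expL μ (1 - ε) ρ →
        concFn μ ε r ≤ (1 - ε) * expL μ (1 - ε) ρ *
          Real.exp (-(Real.log (expL μ (1 - ε) ρ)) * r / ρ)) := by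
  have hE : 1 ≤ expL μ (1 - ε) ρ := le_csSup hfin (aux_one_mem μ (1 - ε) ρ hρ)
  have hE0 : 0 < expL μ (1 - ε) ρ := by linarith
  have main : concFn μ ε r ≤
      (1 - ε) * expL μ (1 - ε) ρ * (expL μ (1 - ε) ρ) ^ (-(r / ρ)) := by
    have h1ε : 0 ≤ 1 - ε := by linarith
    apply Real.sSup_le _ (by positivity)
    rintro v ⟨A, hA, hAε, rfl⟩
    have hrp : 0 < r / ρ := div_pos (by linarith) hρ
    obtain ⟨n, hn⟩ : ∃ n : ℕ, ⌈r / ρ⌉₊ = n + 1 :=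
      Nat.exists_eq_succ_of_ne_zero (Nat.ceil_pos.2 hrp).ne'
    have hn1 : (n : ℝ) < r / ρ := Nat.lt_ceil.1 (by omega)
    have hn2 : r / ρ ≤ n + 1 := by
      have := Nat.le_ceil (r / ρ)
      rw [hn] at this
      exact_mod_cast this
    have h := aux_iter μ ε ρ hε1 hρ hE A hA hAε n r ((lt_div_iff₀ hρ).1 hn1)
    have hm : MeasurableSet (enl A r) :=
      (isClosed_le (Metric.continuous_infDist_pt A) continuous_const).measurableSet
    have h3 : (μ (enl A r)ᶜ).toReal = 1 - (μ (enl A r)).toReal := probReal_compl_eq_one_sub hm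
    have h4 : (enl A r)ᶜ ⊆ {x | r ≤ Metric.infDist x A} := by
      intro x hx
      by_contra hc
      have hc2 : ¬ r ≤ Metric.infDist x A := hc
      exact hx (show Metric.infDist x A ≤ r from (not_le.1 hc2).le)
    have h5 := ENNReal.toReal_mono (measure_ne_top μ _) (measure_mono (μ := μ) h4)
    rw [← h3]
    refine h5.trans ?_
    have h6 : (μ {x | r ≤ Metric.infDist x A}).toReal ≤
        (1 - ε) * (expL μ (1 - ε) ρ) ^ (-(n : ℝ)) := by
      rw [Real.rpow_neg hE0.le, Real.rpow_natCast, ← div_eq_mul_inv, le_div_iff₀ (by positivity)]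
      exact h
    refine h6.trans ?_
    rw [mul_assoc]
    apply mul_le_mul_of_nonneg_left _ h1ε
    calc (expL μ (1 - ε) ρ) ^ (-(n : ℝ)) ≤ (expL μ (1 - ε) ρ) ^ (1 + -(r / ρ)) :=
          Real.rpow_le_rpow_of_exponent_le hE (by linarith)
      _ = _ := by rw [Real.rpow_add hE0, Real.rpow_one]
  refine ⟨main, fun _ => ?_⟩
  rw [Real.rpow_def_of_pos hE0] at main
  convert main using 3
  ring
end
end

section
/- (Concentration bound via Gromov's and Ledoux's expansion coefficients.) Let (X, d, μ) be a metric measure space, 0 < ε < 1, and let r ≥ ρ > 0. Suppose E = Exp_L(X; 1−ε, ρ) is finite, and let G = Exp_G(X; ε, ρ). Then α^ε(r) ≤ (1 − ε)·G·E²·E^{−r/ρ}. Moreover one has the sharper bound α^ε(r) ≤ (1 − G·ε)·E²·E^{−r/ρ}. -/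
open MeasureTheory Metric Set Real

noncomputable section

theorem enl_sub {X : Type*} [MetricSpace X] (A : Set X) (s ρ : ℝ)
    (hne : {x : X | s ≤ infDist x A}.Nonempty) :
    enl {x : X | s ≤ infDist x A} ρ ⊆ {x : X | s - ρ ≤ infDist x A} := by
  intro x hx
  have hx' : infDist x {x : X | s ≤ infDist x A} ≤ ρ := hx
  show s - ρ ≤ infDist x A
  refine le_of_forall_pos_le_add fun δ hδ => ?_
  obtain ⟨y, hy, hxy⟩ := (infDist_lt_iff hne).1 (lt_of_le_of_lt hx' (lt_add_of_pos_right ρ hδ))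
  have h1 : infDist y A ≤ infDist x A + dist y x := infDist_le_infDist_add_dist
  rw [dist_comm] at h1
  have hy' : s ≤ infDist y A := hy
  linarith

theorem sub_enl {X : Type*} [MetricSpace X] (A : Set X) (ρ : ℝ) (hρ : 0 ≤ ρ) : A ⊆ enl A ρ := by
  intro x hx
  show infDist x A ≤ ρ
  rw [infDist_zero_of_mem hx]; exact hρ

theorem one_mem_L {X : Type*} [MetricSpace X] [MeasurableSpace X]
    (μ : Measure X) [IsProbabilityMeasure μ] (ε ρ : ℝ) (hρ : 0 ≤ ρ) : 1 ∈ expLSet μ ε ρ := by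
  refine ⟨le_rfl, fun B _ _ => ?_⟩
  rw [one_mul]
  exact measureReal_mono (sub_enl B ρ hρ)

theorem one_mem_G {X : Type*} [MetricSpace X] [MeasurableSpace X]
    (μ : Measure X) [IsProbabilityMeasure μ] (ε ρ : ℝ) (hρ : 0 ≤ ρ) : 1 ∈ expGSet μ ε ρ := by
  refine ⟨le_rfl, fun B _ h => ?_⟩
  rw [one_mul]
  exact h.trans (measureReal_mono (sub_enl B ρ hρ))

theorem bdd_G {X : Type*} [MetricSpace X] [MeasurableSpace X]
    (μ : Measure X) [IsProbabilityMeasure μ] (ε ρ : ℝ) (h0 : 0 < ε) (h1 : ε < 1) :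
    BddAbove (expGSet μ ε ρ) := by
  refine ⟨1 / ε, fun e he => ?_⟩
  rw [le_div_iff₀ h0]
  refine (he.2 univ MeasurableSet.univ (by simpa using h1.le)).trans ?_
  exact measureReal_le_one

theorem G_prop {X : Type*} [MetricSpace X] [MeasurableSpace X]
    (μ : Measure X) [IsProbabilityMeasure μ] (ε ρ : ℝ) (h0 : 0 < ε) (hρ : 0 ≤ ρ)
    (A : Set X) (hA : MeasurableSet A) (h : ε ≤ (μ A).toReal) :
    expG μ ε ρ * ε ≤ (μ (enl A ρ)).toReal := by
  rw [← le_div_iff₀ h0]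
  refine csSup_le ⟨1, one_mem_G μ ε ρ hρ⟩ fun e he => ?_
  rw [le_div_iff₀ h0]
  exact he.2 A hA h

theorem L_prop {X : Type*} [MetricSpace X] [MeasurableSpace X]
    (μ : Measure X) [IsProbabilityMeasure μ] (ε ρ : ℝ) (hρ : 0 ≤ ρ)
    (B : Set X) (hB : MeasurableSet B) (h : (μ (enl B ρ)).toReal ≤ ε) :
    expL μ ε ρ * (μ B).toReal ≤ (μ (enl B ρ)).toReal := by
  rcases (ENNReal.toReal_nonneg (a := μ B)).eq_or_lt with h0 | h0
  · rw [← h0, mul_zero]; exact ENNReal.toReal_nonneg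
  rw [← le_div_iff₀ h0]
  refine csSup_le ⟨1, one_mem_L μ ε ρ hρ⟩ fun e he => ?_
  rw [le_div_iff₀ h0]
  exact he.2 B hB h

theorem meas_F {X : Type*} [MetricSpace X] [MeasurableSpace X] [BorelSpace X] (A : Set X) (s : ℝ) :
    MeasurableSet {x : X | s ≤ infDist x A} :=
  (isClosed_le continuous_const (continuous_infDist_pt A)).measurableSet

theorem meas_enl {X : Type*} [MetricSpace X] [MeasurableSpace X] [BorelSpace X] (A : Set X)
    (s : ℝ) : MeasurableSet (enl A s) :=
  (isClosed_le (continuous_infDist_pt A) continuous_const).measurableSet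

theorem step_F {X : Type*} [MetricSpace X] [MeasurableSpace X] [BorelSpace X]
    (μ : Measure X) [IsProbabilityMeasure μ] (ε ρ s : ℝ) (hρ : 0 ≤ ρ) (hs : ρ < s)
    (A : Set X) (hA : MeasurableSet A) (h : ε ≤ (μ A).toReal) :
    expL μ (1 - ε) ρ * (μ {x : X | s ≤ infDist x A}).toReal
      ≤ (μ {x : X | s - ρ ≤ infDist x A}).toReal := by
  rcases {x : X | s ≤ infDist x A}.eq_empty_or_nonempty with he | hne
  · rw [he]; simp
  have hsub := enl_sub A s ρ hne
  have h2 : (μ (enl {x : X | s ≤ infDist x A} ρ)).toReal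
      ≤ (μ {x : X | s - ρ ≤ infDist x A}).toReal := measureReal_mono hsub
  refine (L_prop μ (1 - ε) ρ hρ _ (meas_F A s) (h2.trans ?_)).trans h2
  have h3 : (μ {x : X | s - ρ ≤ infDist x A}).toReal ≤ (μ Aᶜ).toReal := by
    refine measureReal_mono fun x hx hxA => ?_
    have hx' : s - ρ ≤ infDist x A := hx
    rw [infDist_zero_of_mem hxA] at hx'
    linarith
  have h4 : (μ Aᶜ).toReal = 1 - (μ A).toReal := probReal_compl_eq_one_sub hA
  linarith

theorem iter_F {X : Type*} [MetricSpace X] [MeasurableSpace X] [BorelSpace X]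
    (μ : Measure X) [IsProbabilityMeasure μ] (ε ρ : ℝ) (hε : 0 < ε) (hρ : 0 ≤ ρ)
    (hE : 1 ≤ expL μ (1 - ε) ρ)
    (A : Set X) (hA : MeasurableSet A) (h : ε ≤ (μ A).toReal) (m : ℕ) :
    ∀ s : ℝ, ρ + m * ρ < s → expL μ (1 - ε) ρ ^ m * (μ {x : X | s ≤ infDist x A}).toReal
      ≤ 1 - expG μ ε ρ * ε := by
  induction m with
  | zero =>
    intro s hs
    have h1 := G_prop μ ε ρ hε hρ A hA h
    have h2 : (μ (enl A ρ)ᶜ).toReal = 1 - (μ (enl A ρ)).toReal :=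
      probReal_compl_eq_one_sub (meas_enl A ρ)
    have h3 : (μ {x : X | s ≤ infDist x A}).toReal ≤ (μ (enl A ρ)ᶜ).toReal := by
      refine measureReal_mono fun x hx hxA => ?_
      have hx' : s ≤ infDist x A := hx
      have hxA' : infDist x A ≤ ρ := hxA
      simp at hs
      linarith
    rw [pow_zero, one_mul]
    linarith
  | succ m ih =>
    intro s hs
    push_cast at hs
    have hm : 0 ≤ (m : ℝ) * ρ := by positivity
    have h1 := ih (s - ρ) (by linarith)
    have h2 := step_F μ ε ρ s hρ (by linarith) A hA h
    rw [pow_succ, mul_assoc]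
    exact (mul_le_mul_of_nonneg_left h2 (by positivity)).trans h1

theorem main_bound {X : Type*} [MetricSpace X] [MeasurableSpace X] [BorelSpace X]
    (μ : Measure X) [IsProbabilityMeasure μ] (ε ρ r : ℝ)
    (hε0 : 0 < ε) (hρ : 0 < ρ) (hr : ρ ≤ r)
    (hE : 1 ≤ expL μ (1 - ε) ρ)
    (A : Set X) (hA : MeasurableSet A) (h : ε ≤ (μ A).toReal) :
    1 - (μ (enl A r)).toReal ≤ (1 - expG μ ε ρ * ε) * (expL μ (1 - ε) ρ) ^ 2 *
        (expL μ (1 - ε) ρ) ^ (-(r / ρ)) := by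
  have hG := G_prop μ ε ρ hε0 hρ.le A hA h
  have hle1 : (μ (enl A ρ)).toReal ≤ 1 := measureReal_le_one
  have hE0 : 0 < expL μ (1 - ε) ρ := by linarith
  rw [mul_assoc, ← rpow_natCast, ← rpow_add hE0]
  rcases hr.eq_or_lt with rfl | hlt
  · rw [div_self hρ.ne']
    have : (1:ℝ) ≤ expL μ (1 - ε) ρ ^ (((2:ℕ):ℝ) + -1) :=
      one_le_rpow hE (by norm_num)
    nlinarith
  have h2 : 2 ≤ ⌈r / ρ⌉₊ := by
    have : 1 < ⌈r / ρ⌉₊ := by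
      rw [Nat.lt_ceil, Nat.cast_one, one_lt_div hρ]; exact hlt
    omega
  obtain ⟨m, hm⟩ := Nat.exists_eq_add_of_le h2
  have hm1 : (m:ℝ) + 1 < r / ρ := by
    have : m + 1 < ⌈r / ρ⌉₊ := by omega
    rw [Nat.lt_ceil] at this
    exact_mod_cast this
  have hm2 : r / ρ ≤ 2 + m := by
    have := Nat.le_ceil (r / ρ)
    rw [hm] at this
    exact_mod_cast this
  have h3 := iter_F μ ε ρ hε0 hρ.le hE A hA h m r (by
    rw [lt_div_iff₀ hρ] at hm1; linarith)
  have h4 : (μ (enl A r)ᶜ).toReal = 1 - (μ (enl A r)).toReal :=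
    probReal_compl_eq_one_sub (meas_enl A r)
  have h5 : (μ (enl A r)ᶜ).toReal ≤ (μ {x : X | r ≤ infDist x A}).toReal := by
    refine measureReal_mono fun x hx => ?_
    have hx' : ¬ infDist x A ≤ r := hx
    exact (not_le.1 hx').le
  rw [← h4]
  refine h5.trans ?_
  have h6 : (μ {x : X | r ≤ infDist x A}).toReal
      ≤ (1 - expG μ ε ρ * ε) * expL μ (1 - ε) ρ ^ (-(m:ℝ)) := by
    rw [rpow_neg hE0.le, rpow_natCast, ← div_eq_mul_inv, le_div_iff₀ (by positivity), mul_comm]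
    exact h3
  refine h6.trans (mul_le_mul_of_nonneg_left ?_ (by linarith))
  apply rpow_le_rpow_of_exponent_le hE
  push_cast
  linarith

theorem stmt12 {X : Type*} [MetricSpace X] [MeasurableSpace X] [BorelSpace X]
    (μ : Measure X) [IsProbabilityMeasure μ] (ε ρ r : ℝ)
    (hε0 : 0 < ε) (hε1 : ε < 1) (hρ : 0 < ρ) (hr : ρ ≤ r)
    (hfin : BddAbove (expLSet μ (1 - ε) ρ)) :
    concFn μ ε r ≤ (1 - ε) * expG μ ε ρ * (expL μ (1 - ε) ρ) ^ 2 *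
        (expL μ (1 - ε) ρ) ^ (-(r / ρ)) ∧
      concFn μ ε r ≤ (1 - expG μ ε ρ * ε) * (expL μ (1 - ε) ρ) ^ 2 *
        (expL μ (1 - ε) ρ) ^ (-(r / ρ)) := by
  have hE : 1 ≤ expL μ (1 - ε) ρ := le_csSup hfin (one_mem_L μ (1 - ε) ρ hρ.le)
  have hG : 1 ≤ expG μ ε ρ := le_csSup (bdd_G μ ε ρ hε0 hε1) (one_mem_G μ ε ρ hρ.le)
  have key : concFn μ ε r ≤ (1 - expG μ ε ρ * ε) * (expL μ (1 - ε) ρ) ^ 2 *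
        (expL μ (1 - ε) ρ) ^ (-(r / ρ)) := by
    refine csSup_le ⟨_, univ, MeasurableSet.univ, by simpa using hε1.le, rfl⟩ ?_
    rintro v ⟨A, hA, h, rfl⟩
    exact main_bound μ ε ρ r hε0 hρ hr hE A hA h
  refine ⟨key.trans ?_, key⟩
  have hE0 : 0 ≤ expL μ (1 - ε) ρ := by linarith
  have h1 : 0 ≤ expL μ (1 - ε) ρ ^ (-(r / ρ)) := rpow_nonneg hE0 _
  gcongr
  linarith
end
end

section
/- (Upper bound for the diameter of a bounded metric measure space.) Let (X, d, μ) be a nonempty bounded metric measure space whose measure μ is doubling with constant C, let 0 < ε ≤ 1/2 and ρ > 0, and write E₁ = Exp_L(X; 1−ε, ρ) and E₂ = Exp_L(X; ε, ρ). Suppose 1 < min{E₁, E₂} and both E₁ and E₂ are finite. Then diam(X) ≤ 3ρ·max{ ln( C⁴·(1 − ε)·ε^{−1}·E₁ ) / ln E₁ , 2·ln( C³·3^{ln C / ln 2}·ε·E₂ ) / ln E₂ }, where diam(X) = sup{d(x, y) : x, y ∈ X}. -/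
open MeasureTheory Metric Set Real

noncomputable section

lemma sup_mem {X : Type*} [MetricSpace X] [MeasurableSpace X] (μ : Measure X) (a ρ : ℝ)
    (hb : BddAbove (expLSet μ a ρ)) (h1 : 1 < expL μ a ρ) : expL μ a ρ ∈ expLSet μ a ρ := by
  have hne : (expLSet μ a ρ).Nonempty := by
    by_contra h
    rw [Set.not_nonempty_iff_eq_empty] at h
    simp only [expL, h, Real.sSup_empty] at h1
    linarith
  have hcl : IsClosed (expLSet μ a ρ) := by
    have : expLSet μ a ρ = Set.Ici 1 ∩ ⋂ (B : Set X) (_ : MeasurableSet B)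
        (_ : (μ (enl B ρ)).toReal ≤ a), {e : ℝ | e * (μ B).toReal ≤ (μ (enl B ρ)).toReal} := by
      ext e
      simp [expLSet]
    rw [this]
    refine isClosed_Ici.inter ?_
    refine isClosed_iInter fun B => isClosed_iInter fun _ => isClosed_iInter fun _ => ?_
    exact isClosed_le (by fun_prop) (by fun_prop)
  exact hcl.csSup_mem hne hb

lemma enl_ball {X : Type*} [MetricSpace X] (z : X) (r ρ : ℝ) (hr : 0 ≤ r) :
    enl (closedBall z r) ρ ⊆ closedBall z (r + ρ) := by
  intro x hx
  have hx' : Metric.infDist x (closedBall z r) ≤ ρ := hx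
  rw [mem_closedBall]
  refine le_of_forall_pos_le_add fun δ hδ => ?_
  obtain ⟨y, hy, hd⟩ := (Metric.infDist_lt_iff ⟨z, mem_closedBall_self hr⟩).1
    (lt_of_le_of_lt hx' (lt_add_of_pos_right ρ hδ))
  have := dist_triangle x y z
  rw [mem_closedBall] at hy
  linarith

lemma grow {X : Type*} [MetricSpace X] [MeasurableSpace X] [BorelSpace X]
    (μ : Measure X) [IsProbabilityMeasure μ] (a ρ e : ℝ) (hρ : 0 < ρ) (he : e ∈ expLSet μ a ρ)
    (z : X) (r : ℝ) (hr : 0 ≤ r) (k : ℕ)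
    (hk : (μ (closedBall z (r + k * ρ))).toReal ≤ a) :
    e ^ k * (μ (closedBall z r)).toReal ≤ (μ (closedBall z (r + k * ρ))).toReal := by
  have mono : ∀ {s t : Set X}, s ⊆ t → (μ s).toReal ≤ (μ t).toReal := fun h =>
    ENNReal.toReal_mono (measure_ne_top _ _) (measure_mono h)
  induction k with
  | zero => simp
  | succ k ih =>
    have hr' : 0 ≤ r + k * ρ := by positivity
    have hs : enl (closedBall z (r + k * ρ)) ρ ⊆ closedBall z (r + (k + 1 : ℕ) * ρ) := by
      have := enl_ball z (r + k * ρ) ρ hr'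
      push_cast
      rwa [show r + ((k:ℝ) + 1) * ρ = r + k * ρ + ρ by ring]
    have h1 := ih (le_trans (mono (closedBall_subset_closedBall (by push_cast; nlinarith))) hk)
    have h2 := he.2 _ measurableSet_closedBall (le_trans (mono hs) hk)
    have he0 : 0 ≤ e := by linarith [he.1]
    calc e ^ (k+1) * (μ (closedBall z r)).toReal
        = e * (e ^ k * (μ (closedBall z r)).toReal) := by ring
      _ ≤ e * (μ (closedBall z (r + k * ρ))).toReal := mul_le_mul_of_nonneg_left h1 he0
      _ ≤ _ := h2
      _ ≤ _ := mono hs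

lemma dbl {X : Type*} [MetricSpace X] [MeasurableSpace X]
    (μ : Measure X) (C : ℝ) (hC : IsDoubling μ C) (z : X) (n : ℕ) :
    ∀ r : ℝ, 0 < r →
    (μ (closedBall z (2 ^ n * r))).toReal ≤ C ^ n * (μ (closedBall z r)).toReal := by
  induction n with
  | zero => intro r _; simp
  | succ n ih =>
    intro r hr
    have h1 := ih (2 * r) (by positivity)
    have h2 := hC.2 z r hr
    have hC0 : 0 ≤ C ^ n := pow_nonneg (by linarith [hC.1]) n
    calc (μ (closedBall z (2 ^ (n+1) * r))).toReal
        = (μ (closedBall z (2 ^ n * (2 * r)))).toReal := by rw [pow_succ, mul_assoc]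
      _ ≤ _ := h1
      _ ≤ C ^ n * (C * (μ (closedBall z r)).toReal) := mul_le_mul_of_nonneg_left h2 hC0
      _ = _ := by ring

lemma dbl1 {X : Type*} [MetricSpace X] [MeasurableSpace X]
    (μ : Measure X) [IsProbabilityMeasure μ]
    (hbdd : Bornology.IsBounded (Set.univ : Set X))
    (C : ℝ) (hC : IsDoubling μ C) (z : X) (n : ℕ) (r : ℝ) (hr : 0 < r)
    (hd : Metric.diam (Set.univ : Set X) ≤ 2 ^ n * r) :
    1 ≤ C ^ n * (μ (closedBall z r)).toReal := by
  have h := dbl μ C hC z n r hr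
  have hu : closedBall z (2 ^ n * r) = Set.univ := by
    ext x
    simp only [mem_closedBall, mem_univ, iff_true]
    exact (Metric.dist_le_diam_of_mem hbdd (mem_univ x) (mem_univ z)).trans hd
  rw [hu] at h
  simpa using h

lemma logk (E M t : ℝ) (hE : 1 < E) (hM : 0 < M) (h : Real.log (M * E) / Real.log E < t) :
    M < E ^ ⌊t⌋₊ := by
  have hl := Real.log_pos hE
  rw [div_lt_iff₀ hl, Real.log_mul hM.ne' (by linarith)] at h
  have hf := Nat.lt_floor_add_one t
  rw [← Real.log_lt_log_iff hM (by positivity), Real.log_pow]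
  nlinarith

theorem stmt16 {X : Type*} [MetricSpace X] [MeasurableSpace X] [BorelSpace X] [Nonempty X]
    (μ : Measure X) [IsProbabilityMeasure μ]
    (hbdd : Bornology.IsBounded (Set.univ : Set X))
    (C : ℝ) (hC : IsDoubling μ C) (ε ρ : ℝ) (hε0 : 0 < ε) (hε1 : ε ≤ 1 / 2) (hρ : 0 < ρ)
    (hfin1 : BddAbove (expLSet μ (1 - ε) ρ)) (hfin2 : BddAbove (expLSet μ ε ρ))
    (h1 : 1 < expL μ (1 - ε) ρ) (h2 : 1 < expL μ ε ρ) :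
    Metric.diam (Set.univ : Set X) ≤ 3 * ρ * max
      (Real.log (C ^ 4 * (1 - ε) * ε⁻¹ * expL μ (1 - ε) ρ) / Real.log (expL μ (1 - ε) ρ))
      (2 * Real.log (C ^ 3 * (3 : ℝ) ^ (Real.log C / Real.log 2) * ε * expL μ ε ρ) /
        Real.log (expL μ ε ρ)) := by
  by_contra hcon
  push Not at hcon
  have hE1 := sup_mem μ (1 - ε) ρ hfin1 h1
  have hE2 := sup_mem μ ε ρ hfin2 h2
  set E1 := expL μ (1 - ε) ρ
  set E2 := expL μ ε ρ
  set D := Metric.diam (Set.univ : Set X) with hD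
  have hC1 := hC.1
  have hC0 : 0 < C := by linarith
  have hC4 : 1 ≤ C ^ 4 := one_le_pow₀ hC1
  have he : 1 ≤ (1 - ε) * ε⁻¹ := by
    rw [← div_eq_mul_inv, le_div_iff₀ hε0]; linarith
  have h3 : C ≤ (3:ℝ) ^ (Real.log C / Real.log 2) := by
    have hl2 : 0 < Real.log 2 := Real.log_pos (by norm_num)
    have hl3 : Real.log 2 ≤ Real.log 3 := Real.log_le_log (by norm_num) (by norm_num)
    rw [Real.le_rpow_iff_log_le hC0 (by norm_num), div_mul_eq_mul_div, le_div_iff₀ hl2]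
    exact mul_le_mul_of_nonneg_left hl3 (Real.log_nonneg hC1)
  have hM1 : 1 ≤ C ^ 4 * (1 - ε) * ε⁻¹ := by
    rw [mul_assoc]; exact one_le_mul_of_one_le_of_one_le hC4 he
  have hmax : ∀ a b : ℝ, 3 * ρ * max a b < D → a < D / (3 * ρ) ∧ b < D / (3 * ρ) := by
    intro a b h
    have : max a b < D / (3 * ρ) := by
      rw [lt_div_iff₀ (by positivity)]; linarith
    exact max_lt_iff.1 this
  obtain ⟨hL1, hL2⟩ := hmax _ _ hcon
  have hDpos : 0 < D := by
    have h0 : 0 ≤ Real.log (C ^ 4 * (1 - ε) * ε⁻¹ * E1) / Real.log E1 :=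
      div_nonneg (Real.log_nonneg (one_le_mul_of_one_le_of_one_le hM1 h1.le)) (Real.log_nonneg h1.le)
    have := lt_of_le_of_lt h0 hL1
    exact (div_pos_iff_of_pos_right (by positivity)).1 this
  have hk1 := logk E1 _ _ h1 (by linarith) hL1
  have hL2' : Real.log (C ^ 3 * (3 : ℝ) ^ (Real.log C / Real.log 2) * ε * E2) / Real.log E2
      < D / (6 * ρ) := by
    have e1 : D / (3 * ρ) = 2 * (D / (6 * ρ)) := by field_simp; norm_num
    rw [e1, mul_div_assoc] at hL2
    linarith
  have hk2 := logk E2 _ _ h2 (by positivity) hL2'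
  set k1 := ⌊D / (3 * ρ)⌋₊
  set k2 := ⌊D / (6 * ρ)⌋₊
  have hk1' : k1 * ρ ≤ D / 3 := by
    have := Nat.floor_le (show 0 ≤ D / (3 * ρ) by positivity)
    rw [le_div_iff₀ (by positivity)] at this
    linarith
  have hk2' : k2 * ρ ≤ D / 6 := by
    have := Nat.floor_le (show 0 ≤ D / (6 * ρ) by positivity)
    rw [le_div_iff₀ (by positivity)] at this
    linarith
  have mono : ∀ {s t : Set X}, s ⊆ t → (μ s).toReal ≤ (μ t).toReal := fun h =>
    ENNReal.toReal_mono (measure_ne_top _ _) (measure_mono h)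
  -- every ball of radius D/4 has measure more than ε
  have key : ∀ z : X, ε < (μ (closedBall z (D / 4))).toReal := by
    intro z
    by_contra hz
    push Not at hz
    have hle : (μ (closedBall z (D / 12 + k2 * ρ))).toReal ≤ ε :=
      le_trans (mono (closedBall_subset_closedBall (by linarith))) hz
    have hg := grow μ ε ρ E2 hρ hE2 z (D / 12) (by positivity) k2 hle
    have hd := dbl1 μ hbdd C hC z 4 (D / 12) (by positivity) (by rw [← hD]; linarith)
    set m := (μ (closedBall z (D / 12))).toReal
    have hm : 0 < m := by
      by_contra hm
      nlinarith
    have hA : C ^ 4 * ε ≤ C ^ 3 * (3 : ℝ) ^ (Real.log C / Real.log 2) * ε := by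
      rw [pow_succ C 3]
      gcongr
    have : C ^ 4 * ε * m < E2 ^ k2 * m := mul_lt_mul_of_pos_right (hA.trans_lt hk2) hm
    nlinarith
  have hxy : ∃ x y : X, 17 * D / 24 < dist x y := by
    by_contra hno
    push Not at hno
    have := Metric.diam_le_of_forall_dist_le (s := (Set.univ : Set X)) (C := 17 * D / 24)
      (by positivity) (fun x _ y _ => hno x y)
    rw [← hD] at this
    linarith
  obtain ⟨x, y, hxy⟩ := hxy
  have hdis : Disjoint (closedBall x (D / 8 + k1 * ρ)) (closedBall y (D / 4)) :=
    closedBall_disjoint_closedBall (by linarith)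
  have hsum : (μ (closedBall x (D / 8 + k1 * ρ))).toReal + (μ (closedBall y (D / 4))).toReal ≤ 1 := by
    rw [← ENNReal.toReal_add (measure_ne_top _ _) (measure_ne_top _ _),
      ← measure_union hdis measurableSet_closedBall]
    exact (mono (Set.subset_univ _)).trans (by simp)
  have hle : (μ (closedBall x (D / 8 + k1 * ρ))).toReal ≤ 1 - ε := by linarith [key y]
  have hg := grow μ (1 - ε) ρ E1 hρ hE1 x (D / 8) (by positivity) k1 hle
  have hd := dbl1 μ hbdd C hC x 4 (D / 8) (by positivity) (by rw [← hD]; linarith)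
  set m := (μ (closedBall x (D / 8))).toReal
  have hm : 0 < m := by
    by_contra hm
    nlinarith
  have hlt : C ^ 4 * (1 - ε) * ε⁻¹ * m < E1 ^ k1 * m := mul_lt_mul_of_pos_right hk1 hm
  have hge : (1 - ε) * ε⁻¹ ≤ (C ^ 4 * m) * ((1 - ε) * ε⁻¹) :=
    le_mul_of_one_le_left (by linarith) hd
  nlinarith
end
end
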